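/- Let (B,+,0,−) be a uniquely 2-divisible K-loop and define s(x,y) = y + (−x + y). For a, b ∈ B, let h be the unique element with h + h = s(b, a/2). Then z = s(h, a/2) satisfies s(a, z) = b; that is, the midpoint of a and b is given explicitly by the formula m(a,b) = s( s(b, a/2)/2 , a/2 ). -/

import Mathlib

/-- In a uniquely 2-divisible K-loop, the midpoint of `a` and `b`
is given explicitly by `m(a,b) = s(s(b, a/2)/2, a/2)`, where `s(x,y) = y + (−x + y)`. -/
theorem kloop_explicit_midpoint {B : Type*}
    (add : B → B → B) (zero : B) (neg : B → B)
    (h0l : ∀ a, add zero a = a)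
    (h0r : ∀ a, add a zero = a)
    (huniql : ∀ a b, ∃! x, add x a = b)
    (huniqr : ∀ a b, ∃! y, add a y = b)
    (hbol : ∀ a b c, add a (add b (add a c)) = add (add a (add b a)) c)
    (haut : ∀ a b, neg (add a b) = add (neg a) (neg b))
    (hnl : ∀ a, add (neg a) a = zero)
    (hnr : ∀ a, add a (neg a) = zero)
    (hlinv : ∀ a x, add (neg a) (add a x) = x)
    (hdiv : Function.Bijective (fun x : B => add x x))
    (s : B → B → B)
    (hs : ∀ x y, s x y = add y (add (neg x) y))
    (a b a2 h : B)
    (ha2 : add a2 a2 = a)          -- a2 = a/2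
    (hh : add h h = s b a2) :       -- h = s(b, a/2)/2
    s a (s h a2) = b := by
  have hnn : ∀ x, neg (neg x) = x := fun x => by
    have h1 := hlinv (neg x) x
    rw [hnl, h0r] at h1
    exact h1
  have hlinv' : ∀ x y, add x (add (neg x) y) = y := fun x y => by
    have h1 := hlinv (neg x) y
    rw [hnn] at h1
    exact h1
  have hdbl : ∀ x y, add (add x x) y = add x (add x y) := fun x y => by
    have h1 := hbol x zero y
    rw [h0l, h0l] at h1
    exact h1.symm
  have hz : ∀ x, add (s h a2) x = add a2 (add (neg h) (add a2 x)) := fun x => by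
    rw [hs, hbol]
  have hna : neg a = add (neg a2) (neg a2) := by rw [← ha2, haut]
  have hnh : add (neg h) (neg h) = add (neg a2) (add b (neg a2)) := by
    rw [← haut, hh, hs, haut, haut, hnn]
  rw [hs a, hz, hna, hdbl, hs h, hlinv, hlinv', ← hdbl, hnh, ← hbol, hlinv', hnl, h0r]
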